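/- Let G be a finitely generated group having a free subgroup of finite index, and let φ be an endomorphism of G. Then there exists a constant R_φ ≥ 1 such that every x ∈ Per(φ) has period at most R_φ, i.e., φ^{R_φ}(x) = x for all x ∈ Per(φ). -/

import Mathlib

/-- The periodic set `Per(φ) = ⋃_{n ≥ 1} Fix(φⁿ)` of an endomorphism `φ`. -/
def perSet {G : Type*} [Group G] (φ : Monoid.End G) : Set G :=
  {x | ∃ n, 1 ≤ n ∧ (φ ^ n) x = x}

/-!
Let `p` be a prime and let `f` be a representation of a finitely generated group `K` over a ring
that is trivial modulo `p`. For an endomorphism `φ` of `K`, if the displacement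
`f (φ^(j+D) x) - f (φ^j x)` is divisible by `q`, then modulo `p q` it is a homomorphism in `x` to a
group of exponent `p`. Only finitely many homomorphisms `K → ℤ/p` exist, so precomposition with `φ`
acts on all homomorphisms to groups of exponent `p` eventually periodically, with a period `d`
depending only on `φ` and `p`. For `d ∣ D`, adding up `p` consecutive equal displacements gains a
factor `p`: the displacement for `p D` is divisible by `p q`. If `f` is faithful and the ring is
`p`-adically separated, the period of every periodic point therefore divides some `d p ^ m`.

Free groups have such a representation for every `p`: send each letter `a` to `1 + p Nₐ`, where
`Nₐ` is the square-zero operator that prepends `a` to words, and play ping-pong. So for subgroups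
of free groups the period divides both `d 2 ^ m` and `e 3 ^ n`, hence `d e`, which bounds it
uniformly. To pass from a torsion-free fully invariant subgroup `K` of finite index to `G`, choose
`T = φ ^ R` fixing the periodic points of `G ⧸ K` and of `K`; for `x` periodic, `k = x⁻¹ T x` lies
in `K` and is fixed by `T`, so `T ^ n x = x k ^ n`, which forces `k = 1`.
-/

open Function

section Dynamics

variable {X : Type*}

/-- A self-map has a uniform period if one positive power of it fixes all its periodic points. -/
def HasUniformPeriod (T : X → X) : Prop :=
  ∃ R, 0 < R ∧ ∀ x ∈ periodicPts T, IsPeriodicPt T R x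

theorem exists_iterate_add_eq_iterate [Finite X] (T : X → X) :
    ∃ i d, 0 < d ∧ T^[i + d] = T^[i] := by
  obtain ⟨m, n, hne, heq⟩ := Finite.exists_ne_map_eq_of_infinite fun n : ℕ => T^[n]
  wlog hlt : m < n generalizing m n
  · exact this n m hne.symm heq.symm (by omega)
  · exact ⟨m, n - m, by omega, by rw [Nat.add_sub_cancel' hlt.le, heq]⟩

theorem hasUniformPeriod_of_finite [Finite X] (T : X → X) : HasUniformPeriod T := by
  obtain ⟨i, d, hd, h⟩ := exists_iterate_add_eq_iterate T
  refine ⟨d, hd, fun x hx => isPeriodicPt_of_mem_periodicPts_of_isPeriodicPt_iterate (n := i) hx ?_⟩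
  rw [IsPeriodicPt, IsFixedPt, ← iterate_add_apply, add_comm, h]

theorem HasUniformPeriod.of_coprime {T : X → X} {p q : ℕ} (hpq : p.Coprime q)
    (hp : ∃ d, 0 < d ∧ ∀ x ∈ periodicPts T, ∃ m, IsPeriodicPt T (d * p ^ m) x)
    (hq : ∃ e, 0 < e ∧ ∀ x ∈ periodicPts T, ∃ m, IsPeriodicPt T (e * q ^ m) x) :
    HasUniformPeriod T := by
  obtain ⟨d, hd, hdp⟩ := hp
  obtain ⟨e, he, heq⟩ := hq
  refine ⟨d * e, Nat.mul_pos hd he, fun x hx => ?_⟩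
  obtain ⟨m, hm⟩ := hdp x hx
  obtain ⟨n, hn⟩ := heq x hx
  have hgcd : (d * e * p ^ m).gcd (d * e * q ^ n) = d * e := by
    rw [Nat.gcd_mul_left, (hpq.pow m n).gcd_eq_one, mul_one]
  rw [← hgcd]
  exact (hm.trans_dvd ⟨e, by ring⟩).gcd (hn.trans_dvd ⟨d, by ring⟩)

end Dynamics

section FiniteTarget

theorem finite_monoidHom_of_fg {G : Type*} [Group G] [Group.FG G] (Q : Type*) [Monoid Q]
    [Finite Q] : Finite (G →* Q) := by
  obtain ⟨S, hS⟩ := Group.fg_def.1 (inferInstance : Group.FG G)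
  exact Finite.of_injective (fun (f : G →* Q) (s : S) => f s) fun f g h =>
    MonoidHom.eq_of_eqOn_dense hS fun s hs => congrFun h ⟨s, hs⟩

/-- Precomposition with an endomorphism `φ`, as a self-map of the homomorphisms out of `G`. -/
def precomp {G Q : Type*} [Monoid G] [Monoid Q] (φ : Monoid.End G) (f : G →* Q) : G →* Q :=
  f.comp φ

theorem precomp_iterate_apply {G Q : Type*} [Monoid G] [Monoid Q] (φ : Monoid.End G) (n : ℕ)
    (f : G →* Q) (x : G) : (precomp φ)^[n] f x = f (φ^[n] x) := by
  induction n generalizing f with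
  | zero => rfl
  | succ n ih => rw [iterate_succ_apply, ih, iterate_succ_apply']; rfl

theorem eq_of_forall_addMonoidHom_zmod_eq {A : Type*} [AddCommGroup A] {p : ℕ} [Fact p.Prime]
    (hA : ∀ a : A, p • a = 0) {a b : A} (h : ∀ l : A →+ ZMod p, l a = l b) : a = b := by
  have := AddCommGroup.zmodModule hA
  refine sub_eq_zero.mp ((Module.forall_dual_apply_eq_zero_iff (ZMod p) (a - b)).mp fun l => ?_)
  rw [map_sub, sub_eq_zero]
  exact h l.toAddMonoidHom

theorem exists_isPeriodicPt_precomp_of_exponent {G : Type*} [Group G] [Group.FG G] (p : ℕ)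
    [Fact p.Prime] (φ : Monoid.End G) :
    ∃ i d, 0 < d ∧ ∀ {A : Type*} [AddCommGroup A] (c : G →* Multiplicative A),
      (∀ x, c x ^ p = 1) → IsPeriodicPt (precomp φ) d ((precomp φ)^[i] c) := by
  have := finite_monoidHom_of_fg (G := G) (Multiplicative (ZMod p))
  obtain ⟨i, d, hd, h⟩ := exists_iterate_add_eq_iterate
    (precomp φ : (G →* Multiplicative (ZMod p)) → _)
  refine ⟨i, d, hd, fun {A} _ c hc => ?_⟩
  rw [IsPeriodicPt, IsFixedPt, ← iterate_add_apply, add_comm]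
  ext x
  rw [precomp_iterate_apply, precomp_iterate_apply]
  have hrange : ∀ a : Additive c.range, p • a = 0 := by
    rintro ⟨_, y, rfl⟩
    exact Subtype.ext (hc y)
  suffices hx : Additive.ofMul (c.rangeRestrict (φ^[i + d] x)) =
      Additive.ofMul (c.rangeRestrict (φ^[i] x)) from congrArg Subtype.val hx
  refine eq_of_forall_addMonoidHom_zmod_eq hrange fun l => ?_
  have hl := DFunLike.congr_fun
    (congrFun h ((AddMonoidHom.toMultiplicativeRight l).comp c.rangeRestrict)) x
  rwa [precomp_iterate_apply, precomp_iterate_apply] at hl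

end FiniteTarget

section Congruence

universe u

variable {R : Type u} [Ring R]

theorem natCast_mul_dvd_mul {p q : ℕ} {a b : R} (ha : (p : R) ∣ a) (hb : (q : R) ∣ b) :
    ((p * q : ℕ) : R) ∣ a * b := by
  obtain ⟨r, rfl⟩ := ha
  obtain ⟨s, rfl⟩ := hb
  refine ⟨r * s, ?_⟩
  rw [Nat.cast_mul, (Nat.cast_commute q r).symm.mul_mul_mul_comm]

/-- The additive subgroup `nR` of a ring `R`. -/
def multiples (R : Type*) [Ring R] (n : ℕ) : AddSubgroup R :=
  (AddMonoidHom.mulLeft (n : R)).range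

theorem mem_multiples {n : ℕ} {r : R} : r ∈ multiples R n ↔ (n : R) ∣ r :=
  exists_congr fun _ => eq_comm

variable {G : Type*} [Monoid G]

/-- Two representations `u` and `v` that are trivial modulo `p` and congruent to each other
modulo `q` differ by a homomorphism into the additive group `R ⧸ pqR`. -/
def displacementHom (p q : ℕ) (u v : G →* R) (hu : ∀ x, (p : R) ∣ u x - 1)
    (hv : ∀ x, (p : R) ∣ v x - 1) (huv : ∀ x, (q : R) ∣ v x - u x) :
    G →* Multiplicative (R ⧸ multiples R (p * q)) where
  toFun x := Multiplicative.ofAdd (QuotientAddGroup.mk (v x - u x))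
  map_one' := by simp only [map_one, sub_self]; rfl
  map_mul' x y := by
    rw [← ofAdd_add, ← QuotientAddGroup.mk_add]
    congr 1
    rw [QuotientAddGroup.eq_iff_sub_mem, mem_multiples]
    have hexpand : v (x * y) - u (x * y) - (v x - u x + (v y - u y)) =
        (v x - u x) * (v y - 1) + (u x - 1) * (v y - u y) := by
      rw [map_mul, map_mul]
      noncomm_ring
    rw [hexpand]
    refine dvd_add ?_ (natCast_mul_dvd_mul (hu x) (huv y))
    rw [mul_comm p q]
    exact natCast_mul_dvd_mul (huv x) (hv y)

theorem displacementHom_pow_eq_one {p q : ℕ} {u v : G →* R} (hu : ∀ x, (p : R) ∣ u x - 1)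
    (hv : ∀ x, (p : R) ∣ v x - 1) (huv : ∀ x, (q : R) ∣ v x - u x) (x : G) :
    displacementHom p q u v hu hv huv x ^ p = 1 := by
  change QuotientAddGroup.mk (p • (v x - u x)) = (0 : R ⧸ multiples R (p * q))
  rw [QuotientAddGroup.eq_zero_iff, mem_multiples, nsmul_eq_mul]
  exact natCast_mul_dvd_mul dvd_rfl (huv x)

theorem dvd_iterate_sub_of_dvd {p q D i j : ℕ} {f : G →* R} (hf : ∀ x, (p : R) ∣ f x - 1)
    {φ : Monoid.End G}
    (hper : ∀ {A : Type u} [AddCommGroup A] (c : G →* Multiplicative A), (∀ x, c x ^ p = 1) →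
      IsPeriodicPt (precomp φ) D ((precomp φ)^[i] c))
    (hq : ∀ x, (q : R) ∣ f (φ^[j + D] x) - f (φ^[j] x)) (x : G) :
    ((p * q : ℕ) : R) ∣ f (φ^[j + i + D * p] x) - f (φ^[j + i] x) := by
  have hpre : ∀ n y, (p : R) ∣ (precomp φ)^[n] f y - 1 := fun n y => by
    rw [precomp_iterate_apply]
    exact hf _
  have hsub : ∀ y, (q : R) ∣ (precomp φ)^[j + D] f y - (precomp φ)^[j] f y := fun y => by
    rw [precomp_iterate_apply, precomp_iterate_apply]
    exact hq y
  let c := displacementHom p q _ _ (hpre j) (hpre (j + D)) hsub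
  have hcp := displacementHom_pow_eq_one (hpre j) (hpre (j + D)) hsub
  have hconst : ∀ k, c (φ^[i + D * k] x) = c (φ^[i] x) := fun k => by
    have hk := DFunLike.congr_fun ((hper c hcp).mul_const k) x
    rwa [precomp_iterate_apply, precomp_iterate_apply, precomp_iterate_apply,
      ← iterate_add_apply] at hk
  -- The blocks `g (k + 1) - g k` of length `D` all equal `c (φ^[i] x)` modulo `p q`, and `p` kills
  -- this value, so their sum over `k < p` vanishes.
  let g : ℕ → R := fun k => f (φ^[j + i + D * k] x)
  have hg : ∀ k, (QuotientAddGroup.mk (g (k + 1) - g k) : R ⧸ multiples R (p * q)) =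
      (c (φ^[i] x)).toAdd := fun k => by
    rw [← hconst k]
    change _ = QuotientAddGroup.mk (_ - _)
    have hsucc : j + (i + D * (k + 1)) = j + D + (i + D * k) := by ring
    simp only [g, precomp_iterate_apply, ← iterate_add_apply, hsucc, add_assoc j i]
  have hsum : QuotientAddGroup.mk (g p - g 0) = (0 : R ⧸ multiples R (p * q)) := by
    rw [← Finset.sum_range_sub, QuotientAddGroup.mk_sum, Finset.sum_congr rfl fun k _ => hg k,
      Finset.sum_const, Finset.card_range]
    exact hcp _
  rwa [QuotientAddGroup.eq_zero_iff, mem_multiples] at hsum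

theorem exists_dvd_iterate_sub {K : Type*} [Group K] [Group.FG K] (p : ℕ) [Fact p.Prime]
    (φ : Monoid.End K) {f : K →* R} (hf : ∀ x, (p : R) ∣ f x - 1) :
    ∃ d, 0 < d ∧ ∀ m, ∃ j, ∀ x,
      ((p ^ (m + 1) : ℕ) : R) ∣ f (φ^[j + d * p ^ m] x) - f (φ^[j] x) := by
  obtain ⟨i, d, hd, hper⟩ := exists_isPeriodicPt_precomp_of_exponent p φ
  refine ⟨d, hd, fun m => ?_⟩
  induction m with
  | zero =>
    refine ⟨0, fun x => ?_⟩
    rw [zero_add, pow_one, ← sub_sub_sub_cancel_right _ _ 1]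
    exact dvd_sub (hf _) (hf _)
  | succ m ih =>
    obtain ⟨j, hj⟩ := ih
    refine ⟨j + i, fun x => ?_⟩
    rw [pow_succ' p (m + 1), pow_succ p m, ← mul_assoc d]
    exact dvd_iterate_sub_of_dvd hf (fun c hc => (hper c hc).mul_const _) hj x

theorem dvd_iterate_sub_of_mem_periodicPts {X : Type*} {T : X → X} {f : X → R} {a : R} {j n : ℕ}
    (h : ∀ x, a ∣ f (T^[j + n] x) - f (T^[j] x)) {x : X} (hx : x ∈ periodicPts T) :
    a ∣ f (T^[n] x) - f x := by
  obtain ⟨y, -, rfl⟩ := (bijOn_periodicPts T).iterate j |>.surjOn hx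
  rw [← iterate_add_apply, add_comm]
  exact h y

theorem exists_isPeriodicPt_mul_pow {K : Type*} [Group K] [Group.FG K] (p : ℕ) [Fact p.Prime]
    (φ : Monoid.End K) {f : K →* R} (hf : ∀ x, (p : R) ∣ f x - 1) (hinj : Injective f)
    (hsep : ∀ r : R, (∀ m, ((p ^ m : ℕ) : R) ∣ r) → r = 0) :
    ∃ d, 0 < d ∧ ∀ x ∈ periodicPts φ, ∃ m, IsPeriodicPt φ (d * p ^ m) x := by
  obtain ⟨d, hd, hdvd⟩ := exists_dvd_iterate_sub p φ hf
  refine ⟨d, hd, fun x hx => ?_⟩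
  have hdisp : ∀ m, ((p ^ m : ℕ) : R) ∣ f (φ^[d * p ^ m] x) - f x := fun m => by
    obtain ⟨j, hj⟩ := hdvd m
    refine .trans ?_ (dvd_iterate_sub_of_mem_periodicPts hj hx)
    exact_mod_cast Nat.cast_dvd_cast (α := R) (pow_dvd_pow p m.le_succ)
  obtain ⟨n, hn, hper⟩ := hx
  obtain ⟨k, hk⟩ := Finite.exists_infinite_fiber fun m : ℕ =>
    (⟨d * p ^ m % n, Nat.mod_lt _ hn⟩ : Fin n)
  have hinf : {m | d * p ^ m % n = k}.Infinite := by
    rw [← Set.infinite_coe_iff]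
    simpa [Set.preimage, Fin.ext_iff] using hk
  have hfiber : ∀ m, d * p ^ m % n = k → φ^[d * p ^ m] x = φ^[k] x := fun m hm => by
    rw [← hm, hper.iterate_mod_apply]
  have hzero : f (φ^[k] x) - f x = 0 := hsep _ fun m => by
    obtain ⟨l, hl, hml⟩ := hinf.exists_gt m
    rw [← hfiber l hl]
    exact .trans (Nat.cast_dvd_cast (pow_dvd_pow p hml.le)) (hdisp l)
  obtain ⟨m, hm⟩ := hinf.nonempty
  exact ⟨m, (hfiber m hm).trans (hinj (sub_eq_zero.mp hzero))⟩

end Congruence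

section PingPong

open scoped Pointwise Function

theorem injective_freeGroupLift_of_zpow_ping_pong {ι G β : Type*} [Nontrivial ι] [Group G]
    [MulAction G β] (a : ι → G) (X : ι → Set β) (hne : ∀ i, (X i).Nonempty)
    (hdisj : Pairwise (Disjoint on X))
    (hpp : Pairwise fun i j => ∀ n : ℤ, n ≠ 0 → a i ^ n • X j ⊆ X i) :
    Injective (FreeGroup.lift a) := by
  have hlift : FreeGroup.lift a =
      (Monoid.CoprodI.lift fun i => FreeGroup.lift fun _ : Unit => a i).comp
        (freeGroupEquivCoprodI (ι := ι)).toMonoidHom := by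
    ext i
    simp
  rw [hlift, MonoidHom.coe_comp]
  refine .comp ?_ (MulEquiv.injective freeGroupEquivCoprodI)
  refine Monoid.CoprodI.lift_injective_of_ping_pong _ (.inr ⟨Classical.arbitrary ι, ?_⟩) X hne hdisj
    fun i j hij => ?_
  · rw [FreeGroup.freeGroupUnitEquivInt.cardinal_eq, Cardinal.mk_denumerable]
    exact Cardinal.natCast_le_aleph0
  · refine FreeGroup.freeGroupUnitEquivInt.forall_congr_left.mpr fun n hn => ?_
    change FreeGroup.lift (fun _ => a i) (FreeGroup.of () ^ n) • X j ⊆ X i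
    rw [map_zpow, FreeGroup.lift_apply_of]
    refine hpp hij n ?_
    rintro rfl
    exact hn rfl

end PingPong

section Magnus

/-- The one-parameter group `n ↦ 1 + n N` of units attached to a square-zero element `N`. -/
def squareZeroUnits {R : Type*} [Ring R] (N : R) (hN : N * N = 0) : Multiplicative ℤ →* Rˣ :=
  MonoidHom.toHomUnits
    { toFun := fun n => 1 + n.toAdd • N
      map_one' := by rw [toAdd_one, zero_smul, add_zero]
      map_mul' := fun m n => by
        rw [toAdd_mul, add_smul, mul_add, add_mul, add_mul, smul_mul_smul_comm, hN]
        simp only [smul_zero, mul_one, one_mul]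
        abel }

theorem val_squareZeroUnits_zpow {R : Type*} [Ring R] {N : R} (hN : N * N = 0) (n : ℤ) :
    (squareZeroUnits N hN (Multiplicative.ofAdd 1) ^ n : Rˣ) = 1 + n • N := by
  rw [← map_zpow, ← ofAdd_zsmul, smul_eq_mul, mul_one]
  rfl

variable {α : Type*}

open Classical in
/-- The endomorphism of `ℤ^(words in α)` that moves the value at each word `t` not starting with
`a` to the word `a t`, and vanishes at all other words. -/
noncomputable def prependLetter (a : α) : Module.End ℤ (List α → ℤ) :=
  LinearMap.pi fun
    | [] => 0
    | b :: t => if b = a ∧ t.head? ≠ some a then LinearMap.proj t else 0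

theorem prependLetter_cons_self {a : α} {t : List α} (ht : t.head? ≠ some a) (f : List α → ℤ) :
    prependLetter a f (a :: t) = f t := by
  simp [prependLetter, ht]

theorem exists_eq_cons_of_prependLetter_ne_zero {a : α} {f : List α → ℤ} {w : List α}
    (h : prependLetter a f w ≠ 0) : ∃ t, w = a :: t ∧ t.head? ≠ some a ∧ f t ≠ 0 := by
  cases w with
  | nil => exact absurd rfl h
  | cons b t =>
    by_cases hb : b = a ∧ t.head? ≠ some a
    · obtain ⟨rfl, ht⟩ := hb
      rw [prependLetter_cons_self ht] at h
      exact ⟨t, rfl, ht, h⟩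
    · simp [prependLetter, hb] at h

theorem prependLetter_mul_self (a : α) : prependLetter a * prependLetter a = 0 := by
  ext f w
  by_contra h
  obtain ⟨t, -, ht, h⟩ := exists_eq_cons_of_prependLetter_ne_zero h
  obtain ⟨s, rfl, -⟩ := exists_eq_cons_of_prependLetter_ne_zero h
  exact ht rfl

/-- The functions on words whose support contains words of a maximal length, all of which start
with `a`: the ping-pong domain of the letter `a`. -/
def leadingSet (a : α) : Set (List α → ℤ) :=
  {f | ∃ t, f (a :: t) ≠ 0 ∧
    ∀ w, f w ≠ 0 → t.length < w.length → w.length = t.length + 1 ∧ w.head? = some a}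

theorem leadingSet_nonempty (a : α) : (leadingSet a).Nonempty := by
  classical
  refine ⟨Pi.single [a] 1, [], ?_, fun w hw _ => ?_⟩
  · rw [Pi.single_eq_same]
    exact one_ne_zero
  · by_cases h : w = [a]
    · exact h ▸ ⟨rfl, rfl⟩
    · exact absurd (Pi.single_eq_of_ne h 1) hw

theorem pairwise_disjoint_leadingSet :
    Pairwise (Disjoint on (leadingSet : α → Set (List α → ℤ))) := by
  intro a b hab
  refine Set.disjoint_left.mpr ?_
  rintro f ⟨t, hta, ht⟩ ⟨s, hsb, hs⟩
  obtain hle | hle := le_total t.length s.length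
  · exact hab (Option.some.inj (ht _ hsb (Nat.lt_succ_of_le hle)).2).symm
  · exact hab (Option.some.inj (hs _ hta (Nat.lt_succ_of_le hle)).2)

theorem add_smul_prependLetter_mem_leadingSet {a b : α} (hab : a ≠ b) {n : ℤ} (hn : n ≠ 0)
    {f : List α → ℤ} (hf : f ∈ leadingSet b) : f + n • prependLetter a f ∈ leadingSet a := by
  obtain ⟨t, htb, ht⟩ := hf
  have hzero : ∀ w, t.length + 1 < w.length → f w = 0 := fun w hw => by
    by_contra hne
    have := (ht w hne (by omega)).1
    omega
  refine ⟨b :: t, ?_, fun w hw hlen => ?_⟩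
  · have hhead : (b :: t).head? ≠ some a := fun h => hab (Option.some.inj h).symm
    rw [Pi.add_apply, Pi.smul_apply, prependLetter_cons_self hhead, hzero _ (by simp), zero_add]
    exact smul_ne_zero hn htb
  · rw [Pi.add_apply, hzero w hlen, zero_add, Pi.smul_apply] at hw
    obtain ⟨s, rfl, -, hs⟩ :=
      exists_eq_cons_of_prependLetter_ne_zero (right_ne_zero_of_smul hw)
    have := (ht s hs (by simpa using hlen)).1
    exact ⟨by simpa using this, rfl⟩

theorem smul_prependLetter_mul_self (p : ℕ) (a : α) :
    (p • prependLetter a) * (p • prependLetter a) = 0 := by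
  rw [smul_mul_smul_comm, prependLetter_mul_self, smul_zero]

/-- The Magnus-type representation of a free group sending each letter `a` to `1 + p Nₐ`, where
`Nₐ` is `prependLetter a`. -/
noncomputable def magnusHom (p : ℕ) : FreeGroup α →* (Module.End ℤ (List α → ℤ))ˣ :=
  FreeGroup.lift fun a =>
    squareZeroUnits (p • prependLetter a) (smul_prependLetter_mul_self p a) (Multiplicative.ofAdd 1)

theorem magnusHom_injective_of_nontrivial [Nontrivial α] {p : ℕ} (hp : p ≠ 0) :
    Injective (magnusHom p : FreeGroup α →* _) := by
  refine injective_freeGroupLift_of_zpow_ping_pong _ leadingSet leadingSet_nonempty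
    pairwise_disjoint_leadingSet fun a b hab n hn => ?_
  refine Set.smul_set_subset_iff.mpr fun f hf => ?_
  have hnp : n * p ≠ 0 := mul_ne_zero hn (Nat.cast_ne_zero.mpr hp)
  have hmem := add_smul_prependLetter_mem_leadingSet hab hnp hf
  rw [mul_smul, natCast_zsmul] at hmem
  rw [Units.smul_def, val_squareZeroUnits_zpow]
  exact hmem

theorem dvd_magnusHom_sub_one (p : ℕ) (x : FreeGroup α) :
    (p : Module.End ℤ (List α → ℤ)) ∣ magnusHom p x - 1 := by
  have hzpow : ∀ (a : α) (n : ℤ),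
      (p : Module.End ℤ (List α → ℤ)) ∣ magnusHom p (.of a ^ n) - 1 := fun a n => by
    rw [map_zpow, magnusHom, FreeGroup.lift_apply_of, val_squareZeroUnits_zpow,
      add_sub_cancel_left, nsmul_eq_mul, ← mul_smul_comm]
    exact dvd_mul_right _ _
  induction x using FreeGroup.induction_on with
  | C1 => simp
  | of a => simpa using hzpow a 1
  | inv_of a _ => simpa using hzpow a (-1)
  | mul x y hx hy =>
    have hexpand : (magnusHom p (x * y) : Module.End ℤ (List α → ℤ)) - 1 =
        (magnusHom p x - 1) * magnusHom p y + (magnusHom p y - 1) := by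
      rw [map_mul, Units.val_mul]
      noncomm_ring
    rw [hexpand]
    exact dvd_add (hx.mul_right _) hy

theorem eq_zero_of_forall_pow_dvd {ι : Type*} {p : ℕ} (hp : 1 < p) (r : Module.End ℤ (ι → ℤ))
    (h : ∀ m, ((p ^ m : ℕ) : Module.End ℤ (ι → ℤ)) ∣ r) : r = 0 := by
  refine LinearMap.ext fun f => funext fun i => ?_
  obtain ⟨s, hs⟩ := h (r f i).natAbs
  refine Int.eq_zero_of_abs_lt_dvd (m := (p ^ (r f i).natAbs : ℕ)) ⟨s f i, ?_⟩ ?_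
  · have hrs := congrFun (LinearMap.congr_fun hs f) i
    rwa [Module.End.mul_apply, Module.End.natCast_apply, Pi.smul_apply, nsmul_eq_mul] at hrs
  · rw [← Int.natCast_natAbs]
    exact_mod_cast Nat.lt_pow_self hp

theorem exists_injective_monoidHom_freeGroup (α : Type*) {p : ℕ} (hp : p ≠ 0) :
    ∃ f : FreeGroup α →* Module.End ℤ (List (α ⊕ Bool) → ℤ), Injective f ∧
      ∀ x, (p : Module.End ℤ (List (α ⊕ Bool) → ℤ)) ∣ f x - 1 := by
  have : Nontrivial (α ⊕ Bool) := Sum.inr_injective.nontrivial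
  exact ⟨(Units.coeHom _).comp ((magnusHom p).comp (FreeGroup.map Sum.inl)),
    Units.val_injective.comp ((magnusHom_injective_of_nontrivial hp).comp
      (FreeGroup.map_injective Sum.inl_injective)), fun _ => dvd_magnusHom_sub_one p _⟩

end Magnus

theorem hasUniformPeriod_of_injective_freeGroup {K : Type*} [Group K] [Group.FG K] {α : Type*}
    {g : K →* FreeGroup α} (hg : Injective g) (ψ : Monoid.End K) : HasUniformPeriod ψ := by
  have hprime : ∀ p : ℕ, p.Prime →
      ∃ d, 0 < d ∧ ∀ x ∈ periodicPts ψ, ∃ m, IsPeriodicPt ψ (d * p ^ m) x := fun p hp => by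
    have := Fact.mk hp
    obtain ⟨f, hinj, hf⟩ := exists_injective_monoidHom_freeGroup α hp.ne_zero
    exact exists_isPeriodicPt_mul_pow p ψ (f := f.comp g) (fun x => hf (g x)) (hinj.comp hg)
      (eq_zero_of_forall_pow_dvd hp.one_lt)
  exact .of_coprime (by norm_num) (hprime 2 Nat.prime_two) (hprime 3 Nat.prime_three)

section Extension

variable {G : Type*} [Group G]

theorem pow_inv_mul_iterate_eq_one {φ : Monoid.End G} {x : G} {m n : ℕ}
    (hx : IsPeriodicPt φ n x) (hk : IsPeriodicPt φ m (x⁻¹ * φ^[m] x)) :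
    (x⁻¹ * φ^[m] x) ^ n = 1 := by
  have hiter : ∀ j, (φ^[m])^[j] x = x * (x⁻¹ * φ^[m] x) ^ j := fun j => by
    induction j with
    | zero => rw [iterate_zero_apply, pow_zero, mul_one]
    | succ j ih =>
      rw [iterate_succ_apply', ih, iterate_map_mul, iterate_map_pow, hk.eq, pow_succ', ← mul_assoc,
        mul_inv_cancel_left]
  exact mul_eq_left.mp ((hiter n).symm.trans (hx.iterate m))

/-- The restriction of an endomorphism to an invariant subgroup. -/
def restrictEnd (φ : Monoid.End G) {N : Subgroup G} (hφ : N ≤ N.comap φ) : Monoid.End N :=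
  (φ.comp N.subtype).codRestrict N fun x => hφ x.2

theorem isPeriodicPt_restrictEnd_iff {φ : Monoid.End G} {N : Subgroup G} (hφ : N ≤ N.comap φ)
    {n : ℕ} {k : N} : IsPeriodicPt (restrictEnd φ hφ) n k ↔ IsPeriodicPt φ n (k : G) := by
  have hsemi : Semiconj N.subtype (restrictEnd φ hφ) φ := fun _ => rfl
  rw [IsPeriodicPt, IsFixedPt, ← N.subtype_injective.eq_iff, hsemi.iterate_right n k]
  rfl

theorem isPeriodicPt_inv_mul_iterate {φ : Monoid.End G} {x : G} {n : ℕ} (hx : IsPeriodicPt φ n x)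
    (m : ℕ) : IsPeriodicPt φ n (x⁻¹ * φ^[m] x) := by
  rw [IsPeriodicPt, IsFixedPt, iterate_map_mul, iterate_map_inv, hx.eq, (hx.apply_iterate m).eq]

theorem HasUniformPeriod.of_restrict_of_quotient {φ : Monoid.End G} {N : Subgroup G} [N.Normal]
    [IsMulTorsionFree N] (hφ : N ≤ N.comap φ) (hN : HasUniformPeriod (restrictEnd φ hφ))
    (hQ : HasUniformPeriod (QuotientGroup.map N N φ hφ)) : HasUniformPeriod φ := by
  obtain ⟨d, hd, hdQ⟩ := hQ
  obtain ⟨e, he, heN⟩ := hN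
  refine ⟨d * e, Nat.mul_pos hd he, fun x ⟨n, hn, hx⟩ => ?_⟩
  have hsemi : Semiconj (QuotientGroup.mk' N) φ (QuotientGroup.map N N φ hφ) := fun _ => rfl
  have hkN : x⁻¹ * φ^[d * e] x ∈ N := by
    rw [← QuotientGroup.eq]
    exact (((hdQ _ ⟨n, hn, hx.map hsemi⟩).mul_const e).symm.trans
      (hsemi.iterate_right (d * e) x).symm)
  let k : N := ⟨x⁻¹ * φ^[d * e] x, hkN⟩
  have hk : IsPeriodicPt φ (d * e) k := (isPeriodicPt_restrictEnd_iff hφ).mp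
    ((heN k ⟨n, hn, (isPeriodicPt_restrictEnd_iff hφ).mpr
      (isPeriodicPt_inv_mul_iterate hx _)⟩).const_mul d)
  have hkn : k ^ n = 1 := Subtype.ext (pow_inv_mul_iterate_eq_one hx hk)
  exact (inv_mul_eq_one.mp (congrArg Subtype.val ((pow_eq_one_iff_left hn.ne').mp hkn))).symm

/-- The intersection of the kernels of all actions of `G` on a set of the size of `G ⧸ F`: a fully
invariant subgroup of `G` contained in `F`. -/
def homCore (F : Subgroup G) : Subgroup G :=
  ⨅ f : G →* Equiv.Perm (G ⧸ F), f.ker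

theorem homCore_le (F : Subgroup G) : homCore F ≤ F :=
  (iInf_le _ (MulAction.toPermHom G (G ⧸ F))).trans
    (F.normalCore_eq_ker.symm.trans_le F.normalCore_le)

theorem homCore_le_comap (F : Subgroup G) (φ : Monoid.End G) : homCore F ≤ (homCore F).comap φ :=
  fun _ hx => Subgroup.mem_iInf.mpr fun f => Subgroup.mem_iInf.mp hx (f.comp φ)

instance normal_homCore (F : Subgroup G) : (homCore F).Normal :=
  Subgroup.normal_iInf_normal fun f => f.normal_ker

instance finiteIndex_homCore [Group.FG G] (F : Subgroup G) [F.FiniteIndex] :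
    (homCore F).FiniteIndex :=
  have := finite_monoidHom_of_fg (G := G) (Equiv.Perm (G ⧸ F))
  Subgroup.finiteIndex_iInf fun _ => inferInstance

end Extension

theorem perSet_eq_periodicPts {G : Type*} [Group G] (φ : Monoid.End G) :
    perSet φ = periodicPts φ := by
  simp only [perSet, Monoid.End.coe_pow]
  rfl

/-- if `G` is a finitely generated group with a free subgroup of finite
index and `φ` is an endomorphism of `G`, then there is a constant `R_φ ≥ 1` such that
`φ^(R_φ)(x) = x` for all `x ∈ Per(φ)`, i.e. every `x ∈ Per(φ)` has period at most
`R_φ`. -/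
theorem exists_uniform_period_of_virtually_free {G : Type*} [Group G] [Group.FG G]
    (F : Subgroup G) [IsFreeGroup ↥F] [F.FiniteIndex] (φ : Monoid.End G) :
    ∃ R, 1 ≤ R ∧ ∀ x ∈ perSet φ, (φ ^ R) x = x := by
  let toFree : homCore F →* FreeGroup (IsFreeGroup.Generators F) :=
    (IsFreeGroup.toFreeGroup F).toMonoidHom.comp (Subgroup.inclusion (homCore_le F))
  have hinj : Injective toFree :=
    (IsFreeGroup.toFreeGroup F).injective.comp (Subgroup.inclusion_injective _)
  have : IsMulTorsionFree (homCore F) := hinj.isMulTorsionFree toFree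
  obtain ⟨R, hR, hper⟩ : HasUniformPeriod φ :=
    .of_restrict_of_quotient (homCore_le_comap F φ)
      (hasUniformPeriod_of_injective_freeGroup hinj _) (hasUniformPeriod_of_finite _)
  refine ⟨R, hR, fun x hx => ?_⟩
  rw [perSet_eq_periodicPts] at hx
  rw [Monoid.End.coe_pow]
  exact hper x hx
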